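/- Let G be a 3-edge-connected cubic graph. For any two distinct edges of G incident with the same vertex, there exists a peripheral cycle of G containing both of them. -/

import Mathlib

open scoped Classical

/-- A multigraph with an orientation: each edge `e` has a source `src e` and a target `tgt e`.
Loops and parallel edges are allowed. -/
structure Multigraph (V E : Type) where
  src : E → V
  tgt : E → V

namespace Multigraph

variable {V E : Type}

/-- `u` and `v` are joined by some edge satisfying the predicate `P`. -/
def adjVia (G : Multigraph V E) (P : E → Prop) (u v : V) : Prop :=
  ∃ e, P e ∧ ((G.src e = u ∧ G.tgt e = v) ∨ (G.src e = v ∧ G.tgt e = u))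

/-- `v` is reachable from `u` using only edges satisfying `P`. -/
def Reaches (G : Multigraph V E) (P : E → Prop) : V → V → Prop :=
  Relation.ReflTransGen (G.adjVia P)

/-- The graph is connected when only edges satisfying `P` are kept (all edges deleted
whose predicate fails, all vertices kept). -/
def ConnectedVia (G : Multigraph V E) (P : E → Prop) : Prop :=
  Nonempty V ∧ ∀ u v : V, G.Reaches P u v

def Connected (G : Multigraph V E) : Prop :=
  G.ConnectedVia fun _ => True

/-- `G` is `k`-edge-connected: it is connected and has no edge cut of size less than `k`;
equivalently, deleting any set of fewer than `k` edges leaves it connected. -/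
def EdgeConnected (G : Multigraph V E) (k : ℕ) : Prop :=
  ∀ S : Set E, S.ncard < k → G.ConnectedVia fun e => e ∉ S

/-- The degree of a vertex (loops counted twice). -/
noncomputable def degree (G : Multigraph V E) (v : V) : ℕ :=
  {e | G.src e = v}.ncard + {e | G.tgt e = v}.ncard

/-- Every vertex has degree exactly 3. -/
def Cubic (G : Multigraph V E) : Prop :=
  ∀ v : V, G.degree v = 3

/-- `φ : E → Γ` is a flow: at every vertex, the sum over outgoing edges equals the
sum over incoming edges. -/
def IsFlow [Fintype E] {Γ : Type} [AddCommGroup Γ] (G : Multigraph V E) (φ : E → Γ) : Prop :=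
  ∀ v : V, (∑ e : E, if G.src e = v then φ e else 0) = ∑ e : E, if G.tgt e = v then φ e else 0

/-- The vertex `v` is an endpoint of some edge of `C`. -/
def touches (G : Multigraph V E) (C : Set E) (v : V) : Prop :=
  ∃ e ∈ C, G.src e = v ∨ G.tgt e = v

/-- An edge set `C` is (the edge set of) a cycle: it is nonempty, every vertex it touches
has degree exactly 2 in it, and it is connected. -/
def IsCycle (G : Multigraph V E) (C : Set E) : Prop :=
  C.Nonempty ∧
  (∀ v : V, G.touches C v →
    ({e ∈ C | G.src e = v}.ncard + {e ∈ C | G.tgt e = v}.ncard = 2)) ∧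
  (∀ u v : V, G.touches C u → G.touches C v → G.Reaches (· ∈ C) u v)

/-- `R` is `k`-closed: every cycle with at least one edge outside `R` has at least
`k+1` edges outside `R`. -/
def Closed (G : Multigraph V E) (k : ℕ) (R : Set E) : Prop :=
  ∀ C : Set E, G.IsCycle C → (C \ R).Nonempty → k + 1 ≤ (C \ R).ncard

/-- The `k`-closure `⟨S⟩ₖ` of `S` : the minimal `k`-closed set containing `S`
(the family of `k`-closed sets is closed under intersections). -/
def kClosure (G : Multigraph V E) (k : ℕ) (S : Set E) : Set E :=
  ⋂₀ {R : Set E | S ⊆ R ∧ G.Closed k R}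

/-- `S` is a `k`-base: its `k`-closure is the whole edge set. -/
def IsBase (G : Multigraph V E) (k : ℕ) (S : Set E) : Prop :=
  G.kClosure k S = Set.univ

/-- An edge set `S` is peripheral if `G − S` is connected. -/
def Peripheral (G : Multigraph V E) (S : Set E) : Prop :=
  G.ConnectedVia fun e => e ∉ S

/-- The spanning subgraph `(V, F)` is a forest, i.e. contains no cycle. -/
def IsForest (G : Multigraph V E) (F : Set E) : Prop :=
  ∀ C : Set E, G.IsCycle C → ¬ C ⊆ F

/-- `vs`, `es` describe a path: distinct vertices `vs 0, …, vs n` and distinct edges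
`es 0, …, es (n-1)` where `es i` joins `vs i` and `vs (i+1)`. -/
def IsPath (G : Multigraph V E) {n : ℕ} (vs : Fin (n + 1) → V) (es : Fin n → E) : Prop :=
  Function.Injective vs ∧ Function.Injective es ∧
  ∀ i : Fin n,
    (G.src (es i) = vs i.castSucc ∧ G.tgt (es i) = vs i.succ) ∨
    (G.src (es i) = vs i.succ ∧ G.tgt (es i) = vs i.castSucc)

/-- The edge `e` has `y` as one endpoint and its other endpoint in `X`,
i.e. `e ∈ E(y, X)`. -/
def joins (G : Multigraph V E) (e : E) (y : V) (X : Set V) : Prop :=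
  (G.src e = y ∧ G.tgt e ∈ X) ∨ (G.tgt e = y ∧ G.src e ∈ X)

/-- `W` is the vertex set of a connected component of `G − X`. -/
def IsComponent (G : Multigraph V E) (X W : Set V) : Prop :=
  W.Nonempty ∧ Disjoint W X ∧
  (∀ u ∈ W, ∀ v : V, v ∉ X → G.adjVia (fun _ => True) u v → v ∈ W) ∧
  (∀ u ∈ W, ∀ v ∈ W, G.Reaches (fun e => G.src e ∉ X ∧ G.tgt e ∉ X) u v)

/-- The subgraph induced on `W`, with only those of its edges satisfying `P` kept,
is connected. -/
def ConnectedOn (G : Multigraph V E) (W : Set V) (P : E → Prop) : Prop :=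
  ∀ u ∈ W, ∀ v ∈ W, G.Reaches (fun e => P e ∧ G.src e ∈ W ∧ G.tgt e ∈ W) u v

/-- The subgraph induced on `W` is `k`-edge-connected. -/
def EdgeConnectedOn (G : Multigraph V E) (W : Set V) (k : ℕ) : Prop :=
  ∀ S : Set E, S.ncard < k → G.ConnectedOn W fun e => e ∉ S

/-- Some cycle lies entirely inside the vertex set `X`. -/
def HasCycleIn (G : Multigraph V E) (X : Set V) : Prop :=
  ∃ C : Set E, G.IsCycle C ∧ ∀ e ∈ C, G.src e ∈ X ∧ G.tgt e ∈ X

/-- The edge cut `E(X, V \ X)`. -/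
def cutEdges (G : Multigraph V E) (X : Set V) : Set E :=
  {e | (G.src e ∈ X ∧ G.tgt e ∉ X) ∨ (G.src e ∉ X ∧ G.tgt e ∈ X)}

/-- A cubic graph is cyclically `k`-edge-connected if every edge cut separating two
cycle-containing parts has at least `k` edges. -/
def CyclicallyEdgeConnected (G : Multigraph V E) (k : ℕ) : Prop :=
  ∀ X : Set V, G.HasCycleIn X → G.HasCycleIn Xᶜ → k ≤ (G.cutEdges X).ncard

/-- `G` is 3-connected: more than 3 vertices, connected, and still connected after
deleting any two vertices. -/
def ThreeConnected [Fintype V] (G : Multigraph V E) : Prop :=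
  3 < Fintype.card V ∧ G.Connected ∧
    ∀ u v : V, G.ConnectedOn {w : V | w ≠ u ∧ w ≠ v} fun _ => True

/-- The graph `G − r` obtained by deleting the vertex `r` and all incident edges. -/
def deleteVertex (G : Multigraph V E) (r : V) :
    Multigraph {v : V // v ≠ r} {e : E // G.src e ≠ r ∧ G.tgt e ≠ r} where
  src e := ⟨G.src e.1, e.2.1⟩
  tgt e := ⟨G.tgt e.1, e.2.2⟩

end Multigraph

namespace Multigraph

variable {V E : Type} {G : Multigraph V E}

/-- The edge `e` has ends `x` and `y`. -/
def Link (G : Multigraph V E) (e : E) (x y : V) : Prop :=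
  (G.src e = x ∧ G.tgt e = y) ∨ (G.src e = y ∧ G.tgt e = x)

theorem Link.symm {e : E} {x y : V} (h : G.Link e x y) : G.Link e y x :=
  Or.symm h

theorem exists_link_of_incident {e : E} {x : V} (h : G.src e = x ∨ G.tgt e = x) :
    ∃ y, G.Link e x y := by
  rcases h with h | h
  · exact ⟨_, Or.inl ⟨h, rfl⟩⟩
  · exact ⟨_, Or.inr ⟨rfl, h⟩⟩

theorem Reaches.symm {P : E → Prop} {x y : V} (h : G.Reaches P x y) : G.Reaches P y x := by
  induction h with
  | refl => exact Relation.ReflTransGen.refl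
  | tail _ hbc ih =>
    obtain ⟨e, he, hl⟩ := hbc
    exact Relation.ReflTransGen.head ⟨e, he, hl.symm⟩ ih

theorem Reaches.mono {P Q : E → Prop} (hPQ : ∀ e, P e → Q e) {x y : V}
    (h : G.Reaches P x y) : G.Reaches Q x y := by
  induction h with
  | refl => exact Relation.ReflTransGen.refl
  | tail _ hbc ih =>
    obtain ⟨e, he, hl⟩ := hbc
    exact ih.tail ⟨e, hPQ e he, hl⟩

theorem Reaches.trans {P : E → Prop} {x y z : V} (h : G.Reaches P x y) (h' : G.Reaches P y z) :
    G.Reaches P x z :=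
  Relation.ReflTransGen.trans h h'

theorem Link.reaches {P : E → Prop} {e : E} {x y : V} (h : G.Link e x y) (he : P e) :
    G.Reaches P x y :=
  Relation.ReflTransGen.single ⟨e, he, h⟩

theorem Reaches.exists_crossing {P : E → Prop} {x y : V} (h : G.Reaches P x y) {X : Set V}
    (hx : x ∈ X) (hy : y ∉ X) : ∃ e u w, P e ∧ G.Link e u w ∧ u ∈ X ∧ w ∉ X := by
  induction h with
  | refl => exact absurd hx hy
  | @tail b c _ hbc ih =>
    by_cases hb : b ∈ X
    · obtain ⟨e, he, hl⟩ := hbc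
      exact ⟨e, b, c, he, hl, hb, hy⟩
    · exact ih hb

/-- A walk starting at `x` uses only edges whose ends are reachable from `x`. -/
theorem Reaches.restrict {P : E → Prop} {x y : V} (h : G.Reaches P x y) :
    G.Reaches (fun e => P e ∧ G.Reaches P x (G.src e) ∧ G.Reaches P x (G.tgt e)) x y := by
  induction h with
  | refl => exact Relation.ReflTransGen.refl
  | @tail b c hb hbc ih =>
    obtain ⟨e, he, hl⟩ := hbc
    have hc : G.Reaches P x c := Reaches.trans hb (Link.reaches hl he)
    refine ih.trans (Link.reaches hl ⟨he, ?_⟩)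
    rcases hl with ⟨rfl, rfl⟩ | ⟨rfl, rfl⟩
    · exact ⟨hb, hc⟩
    · exact ⟨hc, hb⟩

theorem Reaches.exists_path [Nonempty E] {P : E → Prop} {x y : V} (h : G.Reaches P x y) :
    ∃ (n : ℕ) (p : ℕ → V) (c : ℕ → E), p 0 = x ∧ p n = y ∧
      (∀ s ≤ n, ∀ t ≤ n, p s = p t → s = t) ∧
      ∀ t < n, P (c t) ∧ G.Link (c t) (p t) (p (t + 1)) := by
  induction h with
  | refl =>
    exact ⟨0, fun _ => x, fun _ => Classical.arbitrary E, rfl, rfl, by omega, by omega⟩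
  | @tail b d _ hbd ih =>
    obtain ⟨n, p, c, h0, hn, hinj, hc⟩ := ih
    obtain ⟨e, he, hl⟩ := hbd
    by_cases hd : ∃ k ≤ n, p k = d
    · obtain ⟨k, hk, hkd⟩ := hd
      exact ⟨k, p, c, h0, hkd, fun s hs t ht => hinj s (by omega) t (by omega),
        fun t ht => hc t (by omega)⟩
    · push Not at hd
      refine ⟨n + 1, fun t => if t ≤ n then p t else d, fun t => if t < n then c t else e,
        by simpa using h0, by simp, ?_, ?_⟩
      · intro s hs t ht hst
        grind
      · intro t ht
        by_cases htn : t < n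
        · have h1 : t ≤ n := by omega
          have h2 : t + 1 ≤ n := by omega
          simpa [htn, h1, h2] using hc t htn
        · obtain rfl : t = n := by omega
          simpa [hn] using ⟨he, hl⟩

/-- The vertices `p 0, …, p (N - 1)` and edges `c 0, …, c (N - 1)` are distinct and form a
closed walk. -/
structure IsCircuit (G : Multigraph V E) (p : ℕ → V) (c : ℕ → E) (N : ℕ) : Prop where
  two_le : 2 ≤ N
  closed : p N = p 0
  inj : ∀ s < N, ∀ t < N, p s = p t → s = t
  edge_inj : ∀ s < N, ∀ t < N, c s = c t → s = t
  link : ∀ t < N, G.Link (c t) (p t) (p (t + 1))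

namespace IsCircuit

variable {p : ℕ → V} {c : ℕ → E} {N : ℕ}

theorem reaches_segment (h : G.IsCircuit p c N) {P : E → Prop} {l m : ℕ} (hlm : l ≤ m)
    (hm : m ≤ N) (hP : ∀ t, l ≤ t → t < m → P (c t)) : G.Reaches P (p l) (p m) := by
  induction m, hlm using Nat.le_induction with
  | base => exact Relation.ReflTransGen.refl
  | succ k hk ih =>
    exact (ih (by omega) fun t h1 h2 => hP t h1 (by omega)).trans
      (Link.reaches (h.link k (by omega)) (hP k hk (by omega)))

theorem exists_index (h : G.IsCircuit p c N) {x : V}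
    (hx : G.touches {e | ∃ t < N, c t = e} x) : ∃ t < N, p t = x := by
  obtain ⟨_, ⟨t, ht, rfl⟩, hx⟩ := hx
  have h2 := h.two_le
  have h0 := h.closed
  have key : ∃ s ≤ N, p s = x := by
    rcases h.link t ht with ⟨h1, h2⟩ | ⟨h1, h2⟩ <;> rcases hx with hx | hx
    · exact ⟨t, by omega, by rw [← hx, h1]⟩
    · exact ⟨t + 1, by omega, by rw [← hx, h2]⟩
    · exact ⟨t + 1, by omega, by rw [← hx, h1]⟩
    · exact ⟨t, by omega, by rw [← hx, h2]⟩
  obtain ⟨s, hs, hsx⟩ := key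
  by_cases hsN : s < N
  · exact ⟨s, hsN, hsx⟩
  · obtain rfl : s = N := by omega
    exact ⟨0, by omega, by rw [← h0, hsx]⟩

theorem ne_succ (h : G.IsCircuit p c N) {t : ℕ} (ht : t < N) : p t ≠ p (t + 1) := by
  have h2 := h.two_le
  intro heq
  by_cases hN : t + 1 < N
  · have := h.inj t ht (t + 1) hN heq
    omega
  · have hN' : t + 1 = N := by omega
    rw [hN', h.closed] at heq
    have := h.inj t ht 0 (by omega) heq
    omega

/-- Every index `t` of a circuit has a unique cyclic predecessor, different from `t`. -/
theorem exists_pred (h : G.IsCircuit p c N) {t : ℕ} (ht : t < N) :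
    ∃ s < N, s ≠ t ∧ ∀ r < N, p (r + 1) = p t ↔ r = s := by
  have h2 := h.two_le
  have h0 := h.closed
  have hinj := h.inj
  rcases Nat.eq_zero_or_pos t with rfl | hpos
  · refine ⟨N - 1, by omega, by omega, fun r hr => ⟨fun heq => ?_, ?_⟩⟩
    · by_contra hne
      have := hinj (r + 1) (by omega) 0 (by omega) heq
      omega
    · rintro rfl
      rw [show N - 1 + 1 = N by omega, h0]
  · refine ⟨t - 1, by omega, by omega, fun r hr => ⟨fun heq => ?_, ?_⟩⟩
    · by_cases hrN : r + 1 < N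
      · have := hinj (r + 1) hrN t ht heq
        omega
      · rw [show r + 1 = N by omega, h0] at heq
        have := hinj 0 (by omega) t ht heq
        omega
    · rintro rfl
      rw [show t - 1 + 1 = t by omega]

theorem isCycle [Finite E] (h : G.IsCircuit p c N) : G.IsCycle {e | ∃ t < N, c t = e} := by
  have h2 := h.two_le
  refine ⟨⟨c 0, 0, by omega, rfl⟩, ?_, ?_⟩
  · intro x hx
    obtain ⟨t, ht, rfl⟩ := h.exists_index hx
    obtain ⟨s, hs, hst, hpred⟩ := h.exists_pred ht
    rw [← Set.ncard_union_eq _ (Set.toFinite _) (Set.toFinite _)]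
    · have hpair : {e ∈ {e | ∃ t < N, c t = e} | G.src e = p t} ∪
          {e ∈ {e | ∃ t < N, c t = e} | G.tgt e = p t} = {c t, c s} := by
        ext e
        constructor
        · rintro (⟨⟨r, hr, rfl⟩, he⟩ | ⟨⟨r, hr, rfl⟩, he⟩) <;>
            rcases h.link r hr with ⟨h3, h4⟩ | ⟨h3, h4⟩
          · left; rw [h.inj r hr t ht (h3.symm.trans he)]
          · right; rw [(hpred r hr).1 (h3.symm.trans he)]; rfl
          · right; rw [(hpred r hr).1 (h4.symm.trans he)]; rfl
          · left; rw [h.inj r hr t ht (h4.symm.trans he)]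
        · have hs' := (hpred s hs).2 rfl
          rintro (rfl | rfl)
          · rcases h.link t ht with ⟨h3, h4⟩ | ⟨h3, h4⟩
            · exact Or.inl ⟨⟨t, ht, rfl⟩, h3⟩
            · exact Or.inr ⟨⟨t, ht, rfl⟩, h4⟩
          · rcases h.link s hs with ⟨h3, h4⟩ | ⟨h3, h4⟩
            · exact Or.inr ⟨⟨s, hs, rfl⟩, h4.trans hs'⟩
            · exact Or.inl ⟨⟨s, hs, rfl⟩, h3.trans hs'⟩
      rw [hpair, Set.ncard_pair]
      intro heq
      exact hst (h.edge_inj t ht s hs heq).symm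
    · rw [Set.disjoint_left]
      rintro _ ⟨⟨r, hr, rfl⟩, he⟩ ⟨-, he'⟩
      have := h.ne_succ hr
      rcases h.link r hr with ⟨h3, h4⟩ | ⟨h3, h4⟩
      · exact this (by rw [← h3, ← h4, he, he'])
      · exact this (by rw [← h3, ← h4, he, he'])
  · have key : ∀ x, G.touches {e | ∃ t < N, c t = e} x →
        G.Reaches (· ∈ {e | ∃ t < N, c t = e}) (p 0) x := by
      intro x hx
      obtain ⟨t, ht, rfl⟩ := h.exists_index hx
      exact h.reaches_segment (Nat.zero_le t) ht.le fun s _ hs => ⟨s, by omega, rfl⟩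
    exact fun x y hx hy => (key x hx).symm.trans (key y hy)

end IsCircuit

/-- The edge set `F` leaves room for a circuit through `v` starting with the edge `e₁` to `a`
and ending with the edge `e₂` from `b`. -/
structure Avoidable (G : Multigraph V E) (v a b : V) (e₁ e₂ : E) (F : Set E) : Prop where
  left_notMem : e₁ ∉ F
  right_notMem : e₂ ∉ F
  reaches : G.Reaches (fun e => e ∉ F ∧ G.src e ≠ v ∧ G.tgt e ≠ v) a b

theorem Avoidable.exists_circuit {v a b : V} {e₁ e₂ : E} {F : Set E}
    (h : G.Avoidable v a b e₁ e₂ F) (hne : e₁ ≠ e₂) (ha : G.Link e₁ v a) (hb : G.Link e₂ v b)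
    (hbv : b ≠ v) :
    ∃ p c n, G.IsCircuit p c (n + 2) ∧ p 0 = v ∧ p 1 = a ∧ p (n + 1) = b ∧
      c 0 = e₁ ∧ c (n + 1) = e₂ ∧ ∀ t < n + 2, c t ∉ F := by
  have : Nonempty E := ⟨e₁⟩
  obtain ⟨n, p, c, h0, hn, hinj, hc⟩ := h.reaches.exists_path
  have hpv : ∀ t ≤ n, p t ≠ v := by
    intro t ht
    rcases Nat.lt_or_ge t n with htn | htn
    · obtain ⟨⟨-, hs, ht'⟩, hl⟩ := hc t htn
      rcases hl with ⟨h1, h2⟩ | ⟨h1, h2⟩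
      · rwa [← h1]
      · rwa [← h2]
    · obtain rfl : t = n := by omega
      rwa [hn]
  let q : ℕ → V := fun t => if t = 0 then v else if t ≤ n + 1 then p (t - 1) else v
  let d : ℕ → E := fun t => if t = 0 then e₁ else if t ≤ n then c (t - 1) else e₂
  have hq : ∀ t ≤ n, q (t + 1) = p t := by
    intro t ht
    simp [q, ht]
  have hd : ∀ t < n, d (t + 1) = c t := by
    intro t ht
    simp [d, ht]
  have hq0 : q 0 = v := by simp [q]
  have hqN : q (n + 2) = v := by simp [q]
  have hd0 : d 0 = e₁ := by simp [d]
  have hdN : d (n + 1) = e₂ := by simp [d]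
  have hqinj : ∀ s < n + 2, ∀ t < n + 2, q s = q t → s = t := by
    intro s hs t ht hst
    rcases s with _ | s <;> rcases t with _ | t
    · rfl
    · rw [hq0, hq t (by omega)] at hst
      exact absurd hst.symm (hpv t (by omega))
    · rw [hq0, hq s (by omega)] at hst
      exact absurd hst (hpv s (by omega))
    · rw [hq s (by omega), hq t (by omega)] at hst
      rw [hinj s (by omega) t (by omega) hst]
  have hlink : ∀ t < n + 2, G.Link (d t) (q t) (q (t + 1)) := by
    intro t ht
    rcases t with _ | t
    · rw [hd0, hq0, hq 0 (by omega), h0]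
      exact ha
    · rcases Nat.lt_or_ge t n with htn | htn
      · rw [hd t htn, hq t (by omega), hq (t + 1) (by omega)]
        exact (hc t htn).2
      · obtain rfl : t = n := by omega
        rw [hdN, hq t le_rfl, hn, hqN]
        exact hb.symm
  have hdlt : ∀ s t, s < t → t < n + 2 → d s ≠ d t := by
    intro s t hst ht heq
    have hs := hlink s (by omega)
    have ht' := hlink t ht
    rw [heq] at hs
    have hends : q s = q t ∨ (q s = q (t + 1) ∧ q (s + 1) = q t) := by
      rcases hs with ⟨h1, h2⟩ | ⟨h1, h2⟩ <;> rcases ht' with ⟨h3, h4⟩ | ⟨h3, h4⟩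
      · exact Or.inl (h1.symm.trans h3)
      · exact Or.inr ⟨h1.symm.trans h3, h2.symm.trans h4⟩
      · exact Or.inr ⟨h2.symm.trans h4, h1.symm.trans h3⟩
      · exact Or.inl (h2.symm.trans h4)
    rcases hends with h1 | ⟨h1, h2⟩
    · have := hqinj s (by omega) t ht h1
      omega
    · have hs1 := hqinj (s + 1) (by omega) t ht h2
      rcases Nat.lt_or_ge (t + 1) (n + 2) with h3 | h3
      · have := hqinj s (by omega) (t + 1) h3 h1
        omega
      · have htn : t = n + 1 := by omega
        subst htn
        rw [hqN, ← hq0] at h1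
        have hs0 := hqinj s (by omega) 0 (by omega) h1
        rw [hs0, hd0, hdN] at heq
        exact hne heq
  refine ⟨q, d, n, ⟨by omega, by rw [hqN, hq0], hqinj, ?_, hlink⟩, hq0, ?_, ?_, hd0, hdN, ?_⟩
  · intro s hs t ht heq
    rcases lt_trichotomy s t with h1 | h1 | h1
    · exact absurd heq (hdlt s t h1 ht)
    · exact h1
    · exact absurd heq.symm (hdlt t s h1 hs)
  · rw [hq 0 (by omega), h0]
  · rw [hq n le_rfl, hn]
  · intro t ht
    rcases t with _ | t
    · rw [hd0]; exact h.left_notMem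
    · rcases Nat.lt_or_ge t n with htn | htn
      · rw [hd t htn]; exact (hc t htn).1.1
      · obtain rfl : t = n := by omega
        rw [hdN]; exact h.right_notMem

namespace IsCircuit

variable {p : ℕ → V} {c : ℕ → E} {n : ℕ}

/-- The ends of an edge strictly inside a circuit differ from the base point. -/
theorem ends_ne_base (h : G.IsCircuit p c (n + 2)) {t : ℕ} (h1 : 1 ≤ t) (h2 : t < n + 1) :
    G.src (c t) ≠ p 0 ∧ G.tgt (c t) ≠ p 0 := by
  have hne : ∀ s, 1 ≤ s → s < n + 2 → p s ≠ p 0 := by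
    intro s hs hs' heq
    have := h.inj s hs' 0 (by omega) heq
    omega
  have ht := hne t h1 (by omega)
  have ht' := hne (t + 1) (by omega) (by omega)
  rcases h.link t (by omega) with ⟨h3, h4⟩ | ⟨h3, h4⟩ <;> rw [h3, h4] <;> constructor <;> assumption

/-- Rerouting a circuit through a component off the base point's component `A` absorbs the
bypassed segment into `A` when that segment meets `A`. -/
theorem exists_avoidable_of_reroute (h : G.IsCircuit p c (n + 2)) {F : Set E}
    (hF : F = {e | ∃ t < n + 2, c t = e}ᶜ) {l r m : ℕ} (hlr : l < r) (hrm : r < m)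
    (hm : m < n + 2) (hlm : G.Reaches (· ∈ F) (p l) (p m))
    (hl : ¬ G.Reaches (· ∈ F) (p 0) (p l)) (hr : G.Reaches (· ∈ F) (p 0) (p r)) :
    ∃ F' : Set E, G.Avoidable (p 0) (p 1) (p (n + 1)) (c 0) (c (n + 1)) F' ∧
      {x | G.Reaches (· ∈ F) (p 0) x} ⊂ {x | G.Reaches (· ∈ F') (p 0) x} := by
  have hcF : ∀ t < n + 2, c t ∉ F := by
    intro t ht hc
    rw [hF] at hc
    exact hc ⟨t, ht, rfl⟩
  have hl1 : 1 ≤ l := by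
    rcases Nat.eq_zero_or_pos l with rfl | hpos
    · exact absurd Relation.ReflTransGen.refl hl
    · exact hpos
  let F' : Set E := {e | (e ∈ F ∧ G.Reaches (· ∈ F) (p 0) (G.src e)) ∨
    ∃ t, l ≤ t ∧ t < m ∧ c t = e}
  have hcF' : ∀ t < n + 2, t < l ∨ m ≤ t → c t ∉ F' := by
    rintro t ht htlm (⟨hc, -⟩ | ⟨s, hs, hs', heq⟩)
    · exact hcF t ht hc
    · have := h.edge_inj s (by omega) t ht heq
      omega
  refine ⟨F', ⟨hcF' 0 (by omega) (by omega), hcF' (n + 1) (by omega) (by omega), ?_⟩, ?_⟩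
  · refine (h.reaches_segment hl1 (by omega) fun t h1 h2 => ?_).trans
      (Reaches.trans ?_ (h.reaches_segment (l := m) (by omega) (by omega) fun t h1 h2 => ?_))
    · exact ⟨hcF' t (by omega) (by omega), h.ends_ne_base h1 (by omega)⟩
    · refine hlm.restrict.mono ?_
      rintro e ⟨he, hs, ht⟩
      refine ⟨?_, fun heq => hl ?_, fun heq => hl ?_⟩
      · rintro (⟨-, hs'⟩ | ⟨s, -, hs', rfl⟩)
        · exact hl (hs'.trans hs.symm)
        · exact hcF s (by omega) he
      · rw [heq] at hs
        exact hs.symm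
      · rw [heq] at ht
        exact ht.symm
    · exact ⟨hcF' t (by omega) (by omega), h.ends_ne_base (by omega) h2⟩
  · have hsub : ∀ x, G.Reaches (· ∈ F) (p 0) x → G.Reaches (· ∈ F') (p 0) x := fun x hx =>
      hx.restrict.mono fun e he => Or.inl ⟨he.1, he.2.1⟩
    refine ⟨hsub, fun hsup => hl (hsup ?_)⟩
    exact (hsub _ hr).trans
      (h.reaches_segment hlr.le (by omega) fun t h1 h2 => Or.inr ⟨t, h1, by omega, rfl⟩).symm

/-- If the base point's component off a circuit is not everything, some rerouting is possible. -/
theorem exists_reroute (h : G.IsCircuit p c (n + 2)) (hG : G.EdgeConnected 3) {F : Set E}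
    (hF : F = {e | ∃ t < n + 2, c t = e}ᶜ) {w : V} (hw : ¬ G.Reaches (· ∈ F) (p 0) w) :
    ∃ l r m, l < r ∧ r < m ∧ m < n + 2 ∧ G.Reaches (· ∈ F) (p l) (p m) ∧
      ¬ G.Reaches (· ∈ F) (p 0) (p l) ∧ G.Reaches (· ∈ F) (p 0) (p r) := by
  have hmemF : ∀ e, e ∉ F → ∃ t < n + 2, c t = e := by
    intro e he
    rw [hF] at he
    simpa using he
  obtain ⟨s, hsN, hs⟩ : ∃ s < n + 2, ¬ G.Reaches (· ∈ F) (p 0) (p s) := by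
    obtain ⟨e, x, y, -, hl, hx, hy⟩ := ((hG ∅ (by simp)).2 (p 0) w).exists_crossing
      (X := {x | G.Reaches (· ∈ F) (p 0) x}) Relation.ReflTransGen.refl hw
    have he : e ∉ F := fun he => hy (Reaches.trans hx (Link.reaches hl he))
    have htouch : G.touches {e | ∃ t < n + 2, c t = e} y :=
      ⟨e, hmemF e he, hl.elim (fun h => Or.inr h.2) fun h => Or.inl h.1⟩
    obtain ⟨t, ht, rfl⟩ := h.exists_index htouch
    exact ⟨t, ht, hy⟩
  have hend : G.Reaches (· ∈ F) (p 0) (p (n + 2)) := by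
    rw [h.closed]; exact Relation.ReflTransGen.refl
  obtain ⟨j, hsj, hjN, hj, hjmin⟩ : ∃ j, s < j ∧ j ≤ n + 2 ∧ G.Reaches (· ∈ F) (p 0) (p j) ∧
      ∀ t, s ≤ t → t < j → ¬ G.Reaches (· ∈ F) (p 0) (p t) := by
    classical
    have hex : ∃ j, s ≤ j ∧ G.Reaches (· ∈ F) (p 0) (p j) := ⟨n + 2, by omega, hend⟩
    have hspec := Nat.find_spec hex
    refine ⟨Nat.find hex, ?_, Nat.find_min' hex ⟨by omega, hend⟩, hspec.2, ?_⟩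
    · refine lt_of_le_of_ne hspec.1 fun heq => hs ?_
      rw [heq]
      exact hspec.2
    · exact fun t h1 h2 h3 => Nat.find_min hex h2 ⟨h1, h3⟩
  obtain ⟨i, his, hi, himax⟩ : ∃ i, i < s ∧ G.Reaches (· ∈ F) (p 0) (p i) ∧
      ∀ t, i < t → t ≤ s → ¬ G.Reaches (· ∈ F) (p 0) (p t) := by
    classical
    have h0 : G.Reaches (· ∈ F) (p 0) (p 0) := Relation.ReflTransGen.refl
    have hspec := Nat.findGreatest_spec (P := fun t => G.Reaches (· ∈ F) (p 0) (p t))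
      (Nat.zero_le s) h0
    refine ⟨_, lt_of_le_of_ne (Nat.findGreatest_le s) fun heq => hs ?_, hspec, ?_⟩
    · rw [heq] at hspec
      exact hspec
    · exact fun t h1 h2 => Nat.findGreatest_is_greatest h1 h2
  have hout : ∀ t, i < t → t < j → ¬ G.Reaches (· ∈ F) (p 0) (p t) := by
    intro t h1 h2
    rcases Nat.le_total t s with h3 | h3
    · exact himax t h1 h3
    · exact hjmin t h3 h2
  let X : Set V := {x | ∃ t, i < t ∧ t < j ∧ G.Reaches (· ∈ F) (p t) x}
  have hXA : ∀ x ∈ X, ¬ G.Reaches (· ∈ F) (p 0) x := by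
    rintro x ⟨t, h1, h2, h3⟩ h4
    exact hout t h1 h2 (h4.trans h3.symm)
  have hXin : ∀ t, i < t → t < j → p t ∈ X := fun t h1 h2 =>
    ⟨t, h1, h2, Relation.ReflTransGen.refl⟩
  have hcard : ({c i, c (j - 1)} : Set E).ncard < 3 :=
    lt_of_le_of_lt (Set.ncard_insert_le _ _) (by simp)
  obtain ⟨e, x, y, he, hl, hx, hy⟩ := ((hG _ hcard).2 (p s) (p 0)).exists_crossing
    (X := X) (hXin s his hsj) fun hX => hXA _ hX Relation.ReflTransGen.refl
  have heF : e ∉ F := by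
    intro heF
    obtain ⟨t, h1, h2, h3⟩ := hx
    exact hy ⟨t, h1, h2, h3.trans (Link.reaches hl heF)⟩
  obtain ⟨t, ht, rfl⟩ := hmemF e heF
  have hti : t ≠ i := by
    rintro rfl
    exact he (Or.inl rfl)
  have htj : t ≠ j - 1 := by
    rintro rfl
    exact he (Or.inr rfl)
  have hxy : (x = p t ∧ y = p (t + 1)) ∨ (x = p (t + 1) ∧ y = p t) := by
    rcases hl with ⟨h1, h2⟩ | ⟨h1, h2⟩ <;> rcases h.link t ht with ⟨h3, h4⟩ | ⟨h3, h4⟩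
    · exact Or.inl ⟨h1.symm.trans h3, h2.symm.trans h4⟩
    · exact Or.inr ⟨h1.symm.trans h3, h2.symm.trans h4⟩
    · exact Or.inr ⟨h2.symm.trans h4, h1.symm.trans h3⟩
    · exact Or.inl ⟨h2.symm.trans h4, h1.symm.trans h3⟩
  obtain ⟨l, hlN, hlX, hlij⟩ : ∃ l ≤ n + 2, p l ∈ X ∧ (l ≤ i ∨ j ≤ l) := by
    rcases hxy with ⟨rfl, rfl⟩ | ⟨rfl, rfl⟩
    · refine ⟨t, by omega, hx, ?_⟩
      by_contra hcon
      exact hy (hXin (t + 1) (by omega) (by omega))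
    · refine ⟨t + 1, by omega, hx, ?_⟩
      by_contra hcon
      exact hy (hXin t (by omega) (by omega))
  have hlA := hXA _ hlX
  obtain ⟨m, him, hmj, hml⟩ := hlX
  have hli : l ≠ i := by
    rintro rfl
    exact hlA hi
  have hlj : l ≠ j := by
    rintro rfl
    exact hlA hj
  have hlN' : l ≠ n + 2 := by
    rintro rfl
    exact hlA hend
  rcases hlij with hlij | hlij
  · exact ⟨l, i, m, by omega, him, by omega, hml.symm, hlA, hi⟩
  · exact ⟨m, j, l, hmj, by omega, by omega, hml, hout m him hmj, hj⟩

end IsCircuit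

/-- The edges incident with `v`, counted with loops doubled, number three. -/
theorem Cubic.ncard_incident_add_ncard_loops [Finite E] (h : G.Cubic) (v : V) :
    {e | G.src e = v ∨ G.tgt e = v}.ncard + {e | G.src e = v ∧ G.tgt e = v}.ncard = 3 := by
  rw [← h v, degree]
  exact Set.ncard_union_add_ncard_inter {e | G.src e = v} {e | G.tgt e = v}

theorem Cubic.not_loop [Finite E] (h : G.Cubic) (hG : G.EdgeConnected 3) {v b : V} {e₁ e₂ : E}
    (hne : e₁ ≠ e₂) (h₂ : G.Link e₂ v b) : ¬ G.Link e₁ v v := by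
  intro h₁
  have hloop : G.src e₁ = v ∧ G.tgt e₁ = v := h₁.elim id id
  have hinc : G.src e₂ = v ∨ G.tgt e₂ = v := h₂.elim (fun h => Or.inl h.1) fun h => Or.inr h.2
  have hcount := h.ncard_incident_add_ncard_loops v
  have hpair : ({e₁, e₂} : Set E) ⊆ {e | G.src e = v ∨ G.tgt e = v} := by
    rintro e (rfl | rfl)
    · exact Or.inl hloop.1
    · exact hinc
  have hpair_card := Set.ncard_pair hne
  have hle := Set.ncard_le_ncard hpair (Set.toFinite _)
  have hloops : 1 ≤ {e | G.src e = v ∧ G.tgt e = v}.ncard :=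
    (Set.ncard_pos (Set.toFinite _)).2 ⟨e₁, hloop⟩
  have hbv : b ≠ v := by
    rintro rfl
    have hsub : ({e₁, e₂} : Set E) ⊆ {e | G.src e = b ∧ G.tgt e = b} := by
      rintro e (rfl | rfl)
      · exact hloop
      · exact h₂.elim id id
    have := Set.ncard_le_ncard hsub (Set.toFinite _)
    omega
  have heq := Set.eq_of_subset_of_ncard_le hpair (by omega) (Set.toFinite _)
  obtain ⟨e, x, y, he, hl, rfl, hy⟩ := ((hG {e₂} (by simp)).2 v b).exists_crossing
    (X := {v}) rfl hbv
  have hmem : e ∈ ({e₁, e₂} : Set E) := by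
    rw [heq]
    exact hl.elim (fun h => Or.inl h.1) fun h => Or.inr h.2
  rcases hmem with rfl | hmem
  · rcases hl with ⟨-, h2⟩ | ⟨h2, -⟩
    · exact hy (h2.symm.trans hloop.2)
    · exact hy (h2.symm.trans hloop.1)
  · exact he hmem

theorem Cubic.avoidable_empty [Finite E] (h : G.Cubic) (hG : G.EdgeConnected 3) {v a b : V}
    {e₁ e₂ : E} (hb : G.Link e₂ v b) (hav : a ≠ v) :
    G.Avoidable v a b e₁ e₂ ∅ := by
  refine ⟨Set.notMem_empty _, Set.notMem_empty _, ?_⟩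
  let T : Set E := {e | G.src e = v ∨ G.tgt e = v}
  have hT : T.ncard ≤ 3 := by
    have := h.ncard_incident_add_ncard_loops v
    exact le_trans (Nat.le_add_right _ _) this.le
  have he₂ : e₂ ∈ T := hb.elim (fun h => Or.inl h.1) fun h => Or.inr h.2
  have hcard : (T \ {e₂}).ncard < 3 := by
    have := Set.ncard_sdiff_singleton_lt_of_mem he₂ (Set.toFinite _)
    omega
  let X : Set V := {x | G.Reaches (fun e => e ∉ (∅ : Set E) ∧ G.src e ≠ v ∧ G.tgt e ≠ v) a x}
  have hvX : v ∉ X := by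
    intro hv
    obtain ⟨e, x, y, he, hl, -, hy⟩ := Reaches.exists_crossing hv (X := {x | x ≠ v}) hav
      fun hvv => hvv rfl
    have hyv : y = v := not_not.1 hy
    rcases hl with ⟨-, h2⟩ | ⟨h2, -⟩
    · exact he.2.2 (h2.trans hyv)
    · exact he.2.1 (h2.trans hyv)
  obtain ⟨e, x, y, he, hl, hx, hy⟩ := ((hG _ hcard).2 a v).exists_crossing (X := X)
    Relation.ReflTransGen.refl hvX
  by_cases heT : e ∈ T
  · have hee : e = e₂ := by
      by_contra hee
      exact he ⟨heT, hee⟩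
    subst hee
    have hxb : x = v ∨ x = b := by
      rcases hl with ⟨h1, h2⟩ | ⟨h1, h2⟩ <;> rcases hb with ⟨h3, h4⟩ | ⟨h3, h4⟩
      · exact Or.inl (h1.symm.trans h3)
      · exact Or.inr (h1.symm.trans h3)
      · exact Or.inr (h2.symm.trans h4)
      · exact Or.inl (h2.symm.trans h4)
    rcases hxb with rfl | rfl
    · exact absurd hx hvX
    · exact hx
  · have hends : G.src e ≠ v ∧ G.tgt e ≠ v := not_or.1 heT
    exact absurd (Reaches.trans hx (Link.reaches hl ⟨Set.notMem_empty _, hends⟩)) hy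

end Multigraph

open Multigraph

/-- In a 3-edge-connected cubic graph, any two distinct edges incident with a common
vertex lie on a common peripheral cycle. -/
theorem peripheral_cycle_through_two_edges {V E : Type} [Fintype V] [Fintype E]
    (G : Multigraph V E) (hG : G.EdgeConnected 3) (hcubic : G.Cubic)
    (v : V) (e₁ e₂ : E) (hne : e₁ ≠ e₂)
    (h₁ : G.src e₁ = v ∨ G.tgt e₁ = v) (h₂ : G.src e₂ = v ∨ G.tgt e₂ = v) :
    ∃ C : Set E, G.IsCycle C ∧ G.Peripheral C ∧ e₁ ∈ C ∧ e₂ ∈ C := by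
  obtain ⟨a, ha⟩ := exists_link_of_incident h₁
  obtain ⟨b, hb⟩ := exists_link_of_incident h₂
  have hav : a ≠ v := by
    rintro rfl
    exact hcubic.not_loop hG hne hb ha
  have hbv : b ≠ v := by
    rintro rfl
    exact hcubic.not_loop hG hne.symm ha hb
  obtain ⟨F₀, hF₀, hmax⟩ := Set.exists_max_image {F : Set E | G.Avoidable v a b e₁ e₂ F}
    (fun F => {x | G.Reaches (· ∈ F) v x}.ncard) (Set.toFinite _)
    ⟨∅, hcubic.avoidable_empty hG hb hav⟩
  obtain ⟨p, c, n, hpc, rfl, rfl, rfl, rfl, rfl, hc⟩ := hF₀.exists_circuit hne ha hb hbv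
  refine ⟨_, hpc.isCycle, ⟨⟨p 0⟩, ?_⟩, ⟨0, by omega, rfl⟩, ⟨n + 1, by omega, rfl⟩⟩
  suffices hall : ∀ w, G.Reaches (· ∈ {e | ∃ t < n + 2, c t = e}ᶜ) (p 0) w from
    fun x y => (hall x).symm.trans (hall y)
  by_contra! hcon
  obtain ⟨w, hw⟩ := hcon
  obtain ⟨l, r, m, hlr, hrm, hm, hlm, hl, hr⟩ := hpc.exists_reroute hG rfl hw
  obtain ⟨F', hF', hlt⟩ := hpc.exists_avoidable_of_reroute rfl hlr hrm hm hlm hl hr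
  have hle : {x | G.Reaches (· ∈ F₀) (p 0) x}.ncard ≤
      {x | G.Reaches (· ∈ {e | ∃ t < n + 2, c t = e}ᶜ) (p 0) x}.ncard := by
    refine Set.ncard_le_ncard (fun x hx => Reaches.mono ?_ hx) (Set.toFinite _)
    rintro e he ⟨t, ht, rfl⟩
    exact hc t ht he
  exact absurd (hmax F' hF') (not_le.2 (hle.trans_lt (Set.ncard_lt_ncard hlt (Set.toFinite _))))
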